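/- For a ≥ 1 and |x| < 1 (or as formal power series), (1/a) Σ_{d|a} φ(d)·(1-x^d)^{-a/d} = Σ_{b≥0} N_{a,b} x^b, where N_{a,b} is the number of binary necklaces with a black and b red beads. -/

import Mathlib

open Finset

/-- The rotation relation on colourings of `Fin (a + b)` by `Bool`
(`true` = black, `false` = red) with exactly `a` black beads. -/
def necklaceRel (a b : ℕ)
    (f g : {f : Fin (a + b) → Bool // (Finset.univ.filter fun i => f i = true).card = a}) :
    Prop :=
  ∃ r : Fin (a + b), ∀ i, g.1 i = f.1 (i + r)

/-- The number of necklaces with `a` black and `b` red beads. -/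
noncomputable def necklaceNum (a b : ℕ) : ℕ :=
  Nat.card (Quot (necklaceRel a b))

/-!
By Burnside's lemma, `(a + b) * N_{a,b}` is the number of pairs of a colouring and a rotation
fixing it. A colouring fixed by a rotation of order `d` is a colouring of the `(a + b) / d` cosets
of the subgroup it generates, with `a / d` of them black; there are `φ d` such rotations, so
`(a + b) * N_{a,b} = ∑_{d ∣ gcd a b} φ d * C((a + b) / d, a / d)`.
Since `a * C(a + b, a) = (a + b) * multichoose a b`, this becomes
`a * N_{a,b} = ∑_{d ∣ gcd a b} φ d * multichoose (a / d) (b / d)`, and `multichoose k n` is the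
coefficient of `y ^ n` in `(1 - y)⁻ᵏ`.
-/

theorem divisors_filter_dvd_eq_divisors_gcd {n : ℕ} (hn : n ≠ 0) (m : ℕ) :
    {d ∈ n.divisors | d ∣ m} = (n.gcd m).divisors := by
  rw [← Nat.divisors_filter_dvd_of_dvd hn (Nat.gcd_dvd_left n m)]
  refine filter_congr fun d hd => ?_
  rw [Nat.dvd_gcd_iff, and_iff_right (Nat.dvd_of_mem_divisors hd)]

theorem sum_comp_addOrderOf_of_isAddCyclic {G M : Type*} [AddGroup G] [Fintype G] [IsAddCyclic G]
    [AddCommMonoid M] (F : ℕ → M) :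
    ∑ r : G, F (addOrderOf r) = ∑ d ∈ (Fintype.card G).divisors, d.totient • F d := by
  classical
  have order_mem : ∀ r ∈ (univ : Finset G), addOrderOf r ∈ (Fintype.card G).divisors :=
    fun r _ => Nat.mem_divisors.2 ⟨addOrderOf_dvd_card, Fintype.card_ne_zero⟩
  rw [← sum_fiberwise_of_maps_to' order_mem F]
  refine sum_congr rfl fun d hd => ?_
  rw [sum_const, IsAddCyclic.card_addOrderOf_eq_totient (Nat.dvd_of_mem_divisors hd)]

theorem card_filter_quotientMk {G : Type*} [AddGroup G] [Fintype G] (H : AddSubgroup G)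
    [Fintype (G ⧸ H)] (p : G ⧸ H → Prop) [DecidablePred p] :
    #{i : G | p i} = Nat.card H * #{q | p q} := by
  rw [← Fintype.card_subtype, ← Fintype.card_subtype, ← Nat.card_eq_fintype_card,
    ← Nat.card_eq_fintype_card, ← Nat.card_prod]
  exact Nat.card_congr (QuotientAddGroup.preimageMkEquivAddSubgroupProdSet H {q | p q})

/-- Colourings of `X` with exactly `a` black points, encoded as in `necklaceRel`: `true` is black
and `false` is red. -/
abbrev BeadColoring (X : Type*) [Fintype X] (a : ℕ) : Type _ :=
  {f : X → Bool // #{i | f i = true} = a}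

namespace BeadColoring

theorem natCard_eq_choose (X : Type*) [Fintype X] (a : ℕ) :
    Nat.card (BeadColoring X a) = (Fintype.card X).choose a := by
  classical
  rw [← Fintype.card_finset_len, ← Nat.card_eq_fintype_card]
  exact Nat.card_congr
    { toFun := fun f => ⟨({i | f.1 i = true} : Finset X), f.2⟩
      invFun := fun s => ⟨fun i => decide (i ∈ s.1), by simpa using s.2⟩
      left_inv := fun f => by ext; simp
      right_inv := fun s => by ext; simp }

section Translation

variable {G : Type*} [AddGroup G] [Fintype G] {a : ℕ}

instance : AddAction G (BeadColoring G a) where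
  vadd r f := ⟨fun i => f.1 (i + r), (card_equiv (Equiv.addRight r) (by simp)).trans f.2⟩
  zero_vadd f := Subtype.ext (funext fun i => congrArg f.1 (add_zero i))
  add_vadd r s f := Subtype.ext (funext fun i => congrArg f.1 (add_assoc i r s).symm)

theorem vadd_apply (r : G) (f : BeadColoring G a) (i : G) : (r +ᵥ f).1 i = f.1 (i + r) := rfl

theorem mem_fixedBy_iff_periodic {r : G} {f : BeadColoring G a} :
    f ∈ AddAction.fixedBy (BeadColoring G a) r ↔ Function.Periodic f.1 r := by
  simp only [AddAction.mem_fixedBy, Subtype.ext_iff, funext_iff, vadd_apply, Function.Periodic]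

/-- Colourings fixed by translation by `r` are the colourings of the cosets of `⟨r⟩`; each coset
accounts for `addOrderOf r` points. -/
def fixedByEquiv (r : G) [Fintype (G ⧸ AddSubgroup.zmultiples r)] :
    AddAction.fixedBy (BeadColoring G a) r ≃
      {h : G ⧸ AddSubgroup.zmultiples r → Bool // addOrderOf r * #{q | h q = true} = a} where
  toFun f := ⟨(mem_fixedBy_iff_periodic.1 f.2).lift, by
    rw [← Nat.card_zmultiples, ← card_filter_quotientMk]
    exact f.1.2⟩
  invFun h := ⟨⟨fun i => h.1 i, by
    rw [card_filter_quotientMk _ fun q => h.1 q = true, Nat.card_zmultiples, h.2]⟩,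
    mem_fixedBy_iff_periodic.2 fun i => congrArg h.1 <|
      QuotientAddGroup.mk_add_of_mem i (AddSubgroup.mem_zmultiples r)⟩
  left_inv _ := rfl
  right_inv h := by
    ext q
    induction q using QuotientAddGroup.induction_on
    rfl

variable (a)

theorem natCard_fixedBy (r : G) :
    Nat.card (AddAction.fixedBy (BeadColoring G a) r) =
      if addOrderOf r ∣ a then (Fintype.card G / addOrderOf r).choose (a / addOrderOf r)
      else 0 := by
  classical
  have card_cosets : Fintype.card (G ⧸ AddSubgroup.zmultiples r) =
      Fintype.card G / addOrderOf r := by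
    rw [← Nat.card_eq_fintype_card, ← Nat.card_eq_fintype_card, ← Nat.card_zmultiples,
      AddSubgroup.card_eq_card_quotient_mul_card_addSubgroup (AddSubgroup.zmultiples r),
      Nat.mul_div_cancel _ Nat.card_pos]
  rw [Nat.card_congr (fixedByEquiv r)]
  split_ifs with hdvd
  · rw [← card_cosets, ← natCard_eq_choose]
    refine Nat.card_congr (Equiv.subtypeEquivRight fun h => ?_)
    rw [eq_comm, eq_comm (b := a / _), Nat.div_eq_iff_eq_mul_right (addOrderOf_pos r) hdvd]
  · rw [Nat.card_eq_zero]
    exact Or.inl ⟨fun h => hdvd ⟨_, h.2.symm⟩⟩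

variable (G)

theorem natCard_orbits_mul_card [IsAddCyclic G] :
    Nat.card (AddAction.orbitRel.Quotient G (BeadColoring G a)) * Fintype.card G =
      ∑ d ∈ ((Fintype.card G).gcd a).divisors,
        d.totient * (Fintype.card G / d).choose (a / d) := by
  classical
  calc Nat.card (AddAction.orbitRel.Quotient G (BeadColoring G a)) * Fintype.card G
      = ∑ r : G, Nat.card (AddAction.fixedBy (BeadColoring G a) r) := by
        simp only [Nat.card_eq_fintype_card]
        exact (AddAction.sum_card_fixedBy_eq_card_orbits_mul_card_addGroup _ _).symm
    _ = ∑ d ∈ (Fintype.card G).divisors,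
          d.totient • if d ∣ a then (Fintype.card G / d).choose (a / d) else 0 := by
        simp only [natCard_fixedBy]
        exact sum_comp_addOrderOf_of_isAddCyclic
          fun d => if d ∣ a then (Fintype.card G / d).choose (a / d) else 0
    _ = _ := by
        simp only [smul_eq_mul, mul_ite, mul_zero, ← sum_filter]
        rw [divisors_filter_dvd_eq_divisors_gcd Fintype.card_ne_zero]

end Translation

end BeadColoring

theorem mul_choose_eq_add_mul_multichoose (a b : ℕ) :
    a * (a + b).choose a = (a + b) * a.multichoose b := by
  cases a with
  | zero => cases b <;> simp
  | succ k =>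
    rw [Nat.multichoose_eq, Nat.add_right_comm, Nat.add_sub_cancel, ← Nat.choose_symm_add,
      Nat.add_one_mul_choose_eq, mul_comm]

theorem mul_choose_div_eq_add_mul_multichoose_div {a b d : ℕ} (ha : d ∣ a) (hb : d ∣ b) :
    a * ((a + b) / d).choose (a / d) = (a + b) * (a / d).multichoose (b / d) := by
  obtain ⟨k, rfl⟩ := ha
  obtain ⟨l, rfl⟩ := hb
  obtain rfl | hd := d.eq_zero_or_pos
  · simp
  · rw [← mul_add]
    simp only [Nat.mul_div_cancel_left _ hd, mul_assoc, mul_choose_eq_add_mul_multichoose]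

theorem isAddCyclic_fin (n : ℕ) [NeZero n] : IsAddCyclic (Fin n) := by
  obtain ⟨n, rfl⟩ := Nat.exists_eq_succ_of_ne_zero (NeZero.ne n)
  exact inferInstanceAs (IsAddCyclic (ZMod (n + 1)))

theorem necklaceRel_iff_mem_orbit {a b : ℕ} [NeZero (a + b)]
    {f g : BeadColoring (Fin (a + b)) a} :
    necklaceRel a b f g ↔ g ∈ AddAction.orbit (Fin (a + b)) f := by
  simp only [necklaceRel, AddAction.mem_orbit_iff, Subtype.ext_iff, funext_iff,
    BeadColoring.vadd_apply, eq_comm]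

theorem necklaceNum_eq_natCard_orbits (a b : ℕ) [NeZero (a + b)] :
    necklaceNum a b =
      Nat.card (AddAction.orbitRel.Quotient (Fin (a + b)) (BeadColoring (Fin (a + b)) a)) := by
  refine Nat.card_congr (Quot.congrRight fun f g => ?_)
  exact necklaceRel_iff_mem_orbit.trans (AddAction.orbitRel _ _).comm'

theorem necklaceNum_mul_add (a b : ℕ) :
    necklaceNum a b * (a + b) =
      ∑ d ∈ (a.gcd b).divisors, d.totient * ((a + b) / d).choose (a / d) := by
  obtain hab | hab := eq_or_ne (a + b) 0
  · obtain ⟨rfl, rfl⟩ := Nat.add_eq_zero_iff.1 hab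
    simp
  · have : NeZero (a + b) := ⟨hab⟩
    have : IsAddCyclic (Fin (a + b)) := isAddCyclic_fin _
    have burnside := BeadColoring.natCard_orbits_mul_card (Fin (a + b)) a
    rwa [← necklaceNum_eq_natCard_orbits, Fintype.card_fin, Nat.gcd_self_add_left,
      Nat.gcd_comm] at burnside

theorem mul_necklaceNum_eq_sum_multichoose (a b : ℕ) :
    a * necklaceNum a b =
      ∑ d ∈ (a.gcd b).divisors, d.totient * (a / d).multichoose (b / d) := by
  obtain hab | hab := (a + b).eq_zero_or_pos
  · obtain ⟨rfl, rfl⟩ := Nat.add_eq_zero_iff.1 hab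
    simp
  · refine Nat.eq_of_mul_eq_mul_right hab ?_
    rw [mul_assoc, necklaceNum_mul_add, mul_sum, sum_mul]
    refine sum_congr rfl fun d hd => ?_
    obtain ⟨hda, hdb⟩ := Nat.dvd_gcd_iff.1 (Nat.dvd_of_mem_divisors hd)
    rw [mul_left_comm, mul_choose_div_eq_add_mul_multichoose_div hda hdb]
    ring

section GeometricSeries

open scoped Ring

variable {R : Type*} [NormedRing R] [HasSummableGeomSeries R]

theorem hasSum_multichoose_mul_geometric (k : ℕ) {y : R} (hy : ‖y‖ < 1) :
    HasSum (fun n => (k.multichoose n : R) * y ^ n) ((1 - y)⁻¹ʳ ^ k) := by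
  cases k with
  | zero =>
    rw [pow_zero]
    convert! hasSum_single (f := fun n => ((0 : ℕ).multichoose n : R) * y ^ n) 0 fun n hn => ?_
    · simp
    · obtain ⟨n, rfl⟩ := Nat.exists_eq_succ_of_ne_zero hn
      simp
  | succ k =>
    have multichoose_succ (n : ℕ) : (k + 1).multichoose n = (n + k).choose k := by
      rw [Nat.multichoose_eq, Nat.add_right_comm, Nat.add_sub_cancel, ← Nat.choose_symm_add,
        add_comm]
    simpa only [multichoose_succ] using hasSum_choose_mul_geometric_of_norm_lt_one' k hy

theorem hasSum_multichoose_div_mul_geometric {d : ℕ} (hd : d ≠ 0) (k : ℕ) {x : R}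
    (hx : ‖x‖ < 1) :
    HasSum (fun n => if d ∣ n then (k.multichoose (n / d) : R) * x ^ n else 0)
      ((1 - x ^ d)⁻¹ʳ ^ k) := by
  have norm_pow_lt : ‖x ^ d‖ < 1 :=
    (norm_pow_le' x (Nat.pos_of_ne_zero hd)).trans_lt (pow_lt_one₀ (norm_nonneg x) hx hd)
  rw [← (mul_right_injective₀ hd).hasSum_iff]
  · convert! hasSum_multichoose_mul_geometric k norm_pow_lt using 2 with n
    simp [Nat.mul_div_cancel_left _ (Nat.pos_of_ne_zero hd), pow_mul]
  · exact fun n hn => if_neg fun ⟨m, hm⟩ => hn ⟨m, hm.symm⟩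

theorem hasSum_mul_necklaceNum_mul_pow (a : ℕ) {x : R} (hx : ‖x‖ < 1) :
    HasSum (fun b => (a : R) * ((necklaceNum a b : R) * x ^ b))
      (∑ d ∈ a.divisors, (d.totient : R) * (1 - x ^ d)⁻¹ʳ ^ (a / d)) := by
  obtain rfl | ha := eq_or_ne a 0
  · simp
  have coeff_eq (b : ℕ) : (a : R) * ((necklaceNum a b : R) * x ^ b) = ∑ d ∈ a.divisors,
      (d.totient : R) * if d ∣ b then ((a / d).multichoose (b / d) : R) * x ^ b else 0 := by
    rw [← mul_assoc, ← Nat.cast_mul, mul_necklaceNum_eq_sum_multichoose,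
      ← divisors_filter_dvd_eq_divisors_gcd ha, Nat.cast_sum, sum_mul, sum_filter]
    simp only [Nat.cast_mul, mul_assoc, mul_ite, mul_zero]
  simp only [coeff_eq]
  exact hasSum_sum fun d hd =>
    (hasSum_multichoose_div_mul_geometric (Nat.pos_of_mem_divisors hd).ne' _ hx).mul_left _

end GeometricSeries

theorem necklace_generating_function_general {𝕜 : Type*} [NormedDivisionRing 𝕜]
    [HasSummableGeomSeries 𝕜] (a : ℕ) (ha : (a : 𝕜) ≠ 0) (x : 𝕜) (hx : ‖x‖ < 1) :
    HasSum (fun b => (necklaceNum a b : 𝕜) * x ^ b)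
      ((1 / (a : 𝕜)) * ∑ d ∈ a.divisors, (d.totient : 𝕜) * ((1 - x ^ d)⁻¹) ^ (a / d)) := by
  simpa only [Ring.inverse_eq_inv', one_div, inv_mul_cancel_left₀ ha] using
    (hasSum_mul_necklaceNum_mul_pow a hx).mul_left (1 / (a : 𝕜))

theorem necklace_generating_function (a : ℕ) (ha : 1 ≤ a) (x : ℝ) (hx : |x| < 1) :
    (1 / (a : ℝ)) * ∑ d ∈ a.divisors, (Nat.totient d : ℝ) * ((1 - x ^ d)⁻¹) ^ (a / d) =
      ∑' b : ℕ, (necklaceNum a b : ℝ) * x ^ b :=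
  (necklace_generating_function_general a (Nat.cast_ne_zero.2 (by lia)) x hx).tsum_eq.symm
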